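/- Let X^i_α : ℝ^p × ℝ^n → ℝ be smooth. A smooth map x : ℝ^p → ℝ^n is an extremal of the Lagrangian L = ½ h^{αβ} g_{ij} (x^i_α − X^i_α)(x^j_β − X^j_β) √|det h| if and only if it satisfies the generalized Poisson system h^{αβ} x^i_{αβ} = g^{ih} h^{αβ} g_{kj} (∇_h X^k_α) X^j_β + h^{αβ} F_j{}^i{}_α x^j_β + h^{αβ} D_β X^i_α for all i (all quantities depending on (t,x) evaluated at (t, x(t))). -/

import Mathlib

open scoped BigOperators

noncomputable section

/-- Partial derivative of `f : ℝ^m → ℝ` at `t` in the `α`-th coordinate direction. -/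
def pd {m : ℕ} (α : Fin m) (f : (Fin m → ℝ) → ℝ) (t : Fin m → ℝ) : ℝ :=
  fderiv ℝ f t (Pi.single α 1)

/-- Componentwise inverse of a square array of reals (matrix inversion). -/
def minv {m : ℕ} (A : Fin m → Fin m → ℝ) : Fin m → Fin m → ℝ :=
  fun i j => (Matrix.of A)⁻¹ i j

/-- `√|det h(t)|`, the volume density of the metric `h`. -/
def sqrtDet {p : ℕ} (h : (Fin p → ℝ) → Fin p → Fin p → ℝ) (t : Fin p → ℝ) : ℝ :=
  Real.sqrt |(Matrix.of (h t)).det|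

/-- First jet `x^i_α = ∂x^i/∂t^α` of a map `x : ℝ^p → ℝ^n`. -/
def jet {p n : ℕ} (x : (Fin p → ℝ) → Fin n → ℝ) (t : Fin p → ℝ) :
    Fin n → Fin p → ℝ :=
  fun i α => pd α (fun s => x s i) t

/-- Christoffel symbols `G^i_{jk} = ½ g^{il}(∂g_{lj}/∂x^k + ∂g_{lk}/∂x^j − ∂g_{jk}/∂x^l)`. -/
def christoffel {m : ℕ} (g : (Fin m → ℝ) → Fin m → Fin m → ℝ)
    (i j k : Fin m) (q : Fin m → ℝ) : ℝ :=
  (1 / 2) * ∑ l, minv (g q) i l *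
    (pd k (fun y => g y l j) q + pd j (fun y => g y l k) q - pd l (fun y => g y j k) q)

/-- Covariant second jet
`x^i_{αβ} = ∂²x^i/∂t^α∂t^β − H^γ_{αβ} x^i_γ + G^i_{jk} x^j_α x^k_β`. -/
def covHess {p n : ℕ} (h : (Fin p → ℝ) → Fin p → Fin p → ℝ)
    (g : (Fin n → ℝ) → Fin n → Fin n → ℝ)
    (x : (Fin p → ℝ) → Fin n → ℝ) (i : Fin n) (α β : Fin p) (t : Fin p → ℝ) : ℝ :=
  pd α (fun s => jet x s i β) t
    - (∑ γ, christoffel h γ α β t * jet x t i γ)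
    + ∑ j, ∑ k, christoffel g i j k (x t) * jet x t j α * jet x t k β

/-- `∇_j X^i_α = ∂X^i_α/∂x^j + G^i_{jk} X^k_α`. -/
def nablaX {p n : ℕ} (g : (Fin n → ℝ) → Fin n → Fin n → ℝ)
    (X : Fin n → Fin p → (Fin p → ℝ) → (Fin n → ℝ) → ℝ)
    (j i : Fin n) (α : Fin p) (t : Fin p → ℝ) (q : Fin n → ℝ) : ℝ :=
  pd j (fun y => X i α t y) q + ∑ k, christoffel g i j k q * X k α t q

/-- `D_β X^i_α = ∂X^i_α/∂t^β − H^γ_{βα} X^i_γ`. -/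
def Dt {p n : ℕ} (h : (Fin p → ℝ) → Fin p → Fin p → ℝ)
    (X : Fin n → Fin p → (Fin p → ℝ) → (Fin n → ℝ) → ℝ)
    (β : Fin p) (i : Fin n) (α : Fin p) (t : Fin p → ℝ) (q : Fin n → ℝ) : ℝ :=
  pd β (fun s => X i α s q) t - ∑ γ, christoffel h γ β α t * X i γ t q

/-- External tensor `F_j{}^i{}_α = ∇_j X^i_α − g_{hj} g^{ik} ∇_k X^h_α`. -/
def Fext {p n : ℕ} (g : (Fin n → ℝ) → Fin n → Fin n → ℝ)
    (X : Fin n → Fin p → (Fin p → ℝ) → (Fin n → ℝ) → ℝ)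
    (j i : Fin n) (α : Fin p) (t : Fin p → ℝ) (q : Fin n → ℝ) : ℝ :=
  nablaX g X j i α t q
    - ∑ h', ∑ k, g q h' j * minv (g q) i k * nablaX g X k h' α t q

/-- Potential energy `f = ½ h^{αβ} g_{ij} X^i_α X^j_β`. -/
def potE {p n : ℕ} (h : (Fin p → ℝ) → Fin p → Fin p → ℝ)
    (g : (Fin n → ℝ) → Fin n → Fin n → ℝ)
    (X : Fin n → Fin p → (Fin p → ℝ) → (Fin n → ℝ) → ℝ)
    (t : Fin p → ℝ) (q : Fin n → ℝ) : ℝ :=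
  (1 / 2) * ∑ α, ∑ β, ∑ i, ∑ j, minv (h t) α β * g q i j * X i α t q * X j β t q

/-- A map `x` is an extremal of the first-order Lagrangian `L = L(t, x, x_·)` iff it
satisfies the Euler–Lagrange equations
`∂L/∂x^k − (d/dt^α)(∂L/∂x^k_α) = 0` along the first jet of `x`. -/
def IsExtremal {p n : ℕ}
    (L : (Fin p → ℝ) → (Fin n → ℝ) → (Fin n → Fin p → ℝ) → ℝ)
    (x : (Fin p → ℝ) → Fin n → ℝ) : Prop :=
  ∀ (t : Fin p → ℝ) (k : Fin n),
    fderiv ℝ (fun q => L t q (jet x t)) (x t) (Pi.single k 1)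
      - (∑ α, pd α
          (fun s => fderiv ℝ (fun v => L s (x s) v) (jet x s)
            (Pi.single k (Pi.single α 1))) t) = 0

/-!
In terms of the relative velocity `y_α = x_α - X_α` the Lagrangian is the energy
`½ √|det h| h^{αβ} g(y_α, y_β)`. Write `Γ(u)` for the matrix with entries `Γ_{l,jk} u^k`, where
`Γ_{l,jk}` are the Christoffel symbols of the first kind of `g`.

The derivative of `g` in the direction `u` is `Γ(u) + Γ(u)ᵀ`, and `Γ(u) v = Γ(v) u`; the first
identity for `h` in place of `g` gives the divergence of the density,
`∂_α (√|det h| h^{αβ}) = -√|det h| h^{αγ} H^β_{αγ}`. With these three formulas the Euler–Lagrange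
expression becomes `√|det h| h^{αβ} S_{αβ}`, and the Poisson system, with its free index lowered by
`g`, becomes `h^{αβ} T_{αβ} = 0`. Although `S_{αβ} ≠ -T_{αβ}` in general, the symmetrizations of
`S` and `-T` in `α, β` coincide, so the two contractions agree up to the factor `-√|det h|`. This
factor does not vanish and `g` is invertible.
-/

open scoped Matrix

section MatrixCalculus

variable {E : Type*} [NormedAddCommGroup E] [NormedSpace ℝ E] {z : E}
  {ι κ : Type*} [Fintype ι] [Fintype κ]

lemma differentiableAt_dotProduct {u v : E → ι → ℝ} (hu : DifferentiableAt ℝ u z)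
    (hv : DifferentiableAt ℝ v z) : DifferentiableAt ℝ (fun s => u s ⬝ᵥ v s) z := by
  unfold dotProduct
  fun_prop

lemma fderiv_dotProduct_apply {u v : E → ι → ℝ} (hu : DifferentiableAt ℝ u z)
    (hv : DifferentiableAt ℝ v z) (w : E) :
    fderiv ℝ (fun s => u s ⬝ᵥ v s) z w = fderiv ℝ u z w ⬝ᵥ v z + u z ⬝ᵥ fderiv ℝ v z w := by
  have bilinear := (dotProductBilin ℝ ℝ).toContinuousBilinearMap.fderiv_of_bilinear hu hv
  simpa [add_comm] using congr($bilinear w)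

omit [Fintype ι] in
lemma differentiableAt_mulVec {A : E → ι → κ → ℝ} {u : E → κ → ℝ}
    (hA : DifferentiableAt ℝ A z) (hu : DifferentiableAt ℝ u z) :
    DifferentiableAt ℝ (fun s => Matrix.of (A s) *ᵥ u s) z :=
  differentiableAt_pi.2 fun i => differentiableAt_dotProduct (differentiableAt_pi.1 hA i) hu

omit [Fintype ι] in
lemma fderiv_mulVec_apply [Finite ι] {A : E → ι → κ → ℝ} {u : E → κ → ℝ}
    (hA : DifferentiableAt ℝ A z) (hu : DifferentiableAt ℝ u z) (w : E) :
    fderiv ℝ (fun s => Matrix.of (A s) *ᵥ u s) z w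
      = Matrix.of (fderiv ℝ A z w) *ᵥ u z + Matrix.of (A z) *ᵥ fderiv ℝ u z w := by
  cases nonempty_fintype ι
  have bilinear := ((Matrix.mulVecBilin ℝ ℝ).comp
    (Matrix.ofLinearEquiv ℝ).toLinearMap).toContinuousBilinearMap.fderiv_of_bilinear hA hu
  simpa [add_comm] using congr($bilinear w)

/-- The determinant as a continuous multilinear function of the rows, which makes the calculus of
multilinear maps available. -/
def detContinuousMultilinearMap (ι : Type*) [Fintype ι] [DecidableEq ι] :
    ContinuousMultilinearMap ℝ (fun _ : ι => ι → ℝ) ℝ where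
  toMultilinearMap := Matrix.detRowAlternating.toMultilinearMap
  cont := continuous_id.matrix_det

lemma differentiableAt_det [DecidableEq ι] (A : ι → ι → ℝ) :
    DifferentiableAt ℝ (fun A : ι → ι → ℝ => (Matrix.of A).det) A :=
  ((detContinuousMultilinearMap ι).hasFDerivAt A).differentiableAt

lemma fderiv_det_apply [DecidableEq ι] (A B : ι → ι → ℝ) :
    fderiv ℝ (fun A : ι → ι → ℝ => (Matrix.of A).det) A B
      = ((Matrix.of A).adjugate * Matrix.of B).trace := by
  have det_updateRow : ∀ i, ((Matrix.of A).updateRow i (B i)).det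
      = (Matrix.of B * (Matrix.of A).adjugate) i i := fun i => by
    rw [← Matrix.cramer_transpose_apply, Matrix.cramer_eq_adjugate_mulVec,
      ← Matrix.adjugate_transpose, Matrix.mulVec_transpose]
    rfl
  calc fderiv ℝ (fun A : ι → ι → ℝ => (Matrix.of A).det) A B
      = (detContinuousMultilinearMap ι).linearDeriv A B :=
        congr($(((detContinuousMultilinearMap ι).hasFDerivAt A).fderiv) B)
    _ = ∑ i, ((Matrix.of A).updateRow i (B i)).det :=
        (detContinuousMultilinearMap ι).linearDeriv_apply A B
    _ = (Matrix.of B * (Matrix.of A).adjugate).trace := Finset.sum_congr rfl fun i _ =>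
        det_updateRow i
    _ = ((Matrix.of A).adjugate * Matrix.of B).trace := Matrix.trace_mul_comm _ _

end MatrixCalculus

section InverseMatrix

variable {m : ℕ} {A : Fin m → Fin m → ℝ}

lemma minv_symm (hA : ∀ i j, A i j = A j i) (i j : Fin m) : minv A i j = minv A j i :=
  (Matrix.IsSymm.ext fun i j => hA j i : (Matrix.of A).IsSymm).inv.apply j i

attribute [local instance] Matrix.linftyOpNormedRing Matrix.linftyOpNormedAlgebra in
lemma hasFDerivAt_minv (hA : (Matrix.of A).det ≠ 0) :
    HasFDerivAt minv (LinearMap.toContinuousLinearMap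
      ((Matrix.ofLinearEquiv ℝ).symm.toLinearMap ∘ₗ
        (-LinearMap.mulLeftRight ℝ ((Matrix.of A)⁻¹, (Matrix.of A)⁻¹)) ∘ₗ
          (Matrix.ofLinearEquiv ℝ).toLinearMap)) A := by
  obtain ⟨U, hU⟩ := (Matrix.isUnit_iff_isUnit_det _).2 (isUnit_iff_ne_zero.2 hA)
  let e : (Fin m → Fin m → ℝ) ≃L[ℝ] Matrix (Fin m) (Fin m) ℝ :=
    (Matrix.ofLinearEquiv ℝ).toContinuousLinearEquiv
  have minv_eq : minv = fun B : Fin m → Fin m → ℝ => e.symm (Ring.inverse (e B)) := by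
    funext B
    rw [← Matrix.nonsing_inv_eq_ringInverse]
    rfl
  have inverse_deriv := hasFDerivAt_ringInverse (𝕜 := ℝ) U
  rw [Matrix.coe_units_inv, hU] at inverse_deriv
  rw [minv_eq]
  exact ((e.symm.hasFDerivAt.comp (e A) inverse_deriv).comp A e.hasFDerivAt).congr_fderiv rfl

lemma differentiableAt_minv (hA : (Matrix.of A).det ≠ 0) : DifferentiableAt ℝ minv A :=
  (hasFDerivAt_minv hA).differentiableAt

lemma of_fderiv_minv_apply (hA : (Matrix.of A).det ≠ 0) (B : Fin m → Fin m → ℝ) :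
    Matrix.of (fderiv ℝ minv A B) = -((Matrix.of A)⁻¹ * Matrix.of B * (Matrix.of A)⁻¹) := by
  rw [(hasFDerivAt_minv hA).fderiv]
  rfl

end InverseMatrix

section PartialDerivatives

variable {m : ℕ} {F : Type*} [NormedAddCommGroup F] [NormedSpace ℝ F]

/-- The partial derivative `pd` for maps with values in a normed space, so that vectors and
matrices can be differentiated as a whole. -/
def partialDeriv (α : Fin m) (f : (Fin m → ℝ) → F) (t : Fin m → ℝ) : F :=
  fderiv ℝ f t (Pi.single α 1)

lemma fderiv_pi_apply {E : Type*} [NormedAddCommGroup E] [NormedSpace ℝ E] {ι : Type*}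
    {f : E → ι → F} {z : E} (hf : DifferentiableAt ℝ f z) (w : E) (i : ι) :
    fderiv ℝ f z w i = fderiv ℝ (fun s => f s i) z w := by
  rw [fderiv_apply hf]
  rfl

lemma fderiv_apply_eq_sum_pd (f : (Fin m → ℝ) → ℝ) (q u : Fin m → ℝ) :
    fderiv ℝ f q u = ∑ k, pd k f q * u k := by
  conv_lhs => rw [pi_eq_sum_univ' u, map_sum]
  simp only [map_smul, smul_eq_mul, pd, mul_comm]

lemma fderiv_apply_eq_jet_mulVec {n : ℕ} {f : (Fin m → ℝ) → Fin n → ℝ} {q : Fin m → ℝ}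
    (hf : DifferentiableAt ℝ f q) (u : Fin m → ℝ) :
    fderiv ℝ f q u = Matrix.of (jet f q) *ᵥ u :=
  funext fun i => (fderiv_pi_apply hf u i).trans (fderiv_apply_eq_sum_pd _ q u)

lemma jet_eq_partialDeriv {n : ℕ} {f : (Fin m → ℝ) → Fin n → ℝ} {q : Fin m → ℝ}
    (hf : DifferentiableAt ℝ f q) (i : Fin n) (α : Fin m) : jet f q i α = partialDeriv α f q i :=
  (fderiv_pi_apply hf _ i).symm

lemma fderiv_comp_graph {E G : Type*} [NormedAddCommGroup E] [NormedSpace ℝ E]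
    [NormedAddCommGroup G] [NormedSpace ℝ G] {f : E → F → G} {x : E → F} {t : E}
    (hf : DifferentiableAt ℝ (fun z : E × F => f z.1 z.2) (t, x t)) (hx : DifferentiableAt ℝ x t)
    (w : E) :
    fderiv ℝ (fun s => f s (x s)) t w
      = fderiv ℝ (fun s => f s (x t)) t w + fderiv ℝ (f t) (x t) (fderiv ℝ x t w) := by
  have along_graph : HasFDerivAt (fun s => f s (x s)) _ t := hf.hasFDerivAt.comp t
    (f := fun s => (s, x s)) ((hasFDerivAt_id t).prodMk hx.hasFDerivAt)
  have along_fst : HasFDerivAt (fun s => f s (x t)) _ t := hf.hasFDerivAt.comp t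
    (f := fun s => (s, x t)) ((hasFDerivAt_id t).prodMk (hasFDerivAt_const (x t) t))
  have along_snd : HasFDerivAt (f t) _ (x t) := hf.hasFDerivAt.comp (x t)
    (f := fun y => (t, y)) ((hasFDerivAt_const t (x t)).prodMk (hasFDerivAt_id (x t)))
  rw [along_graph.fderiv, along_fst.fderiv, along_snd.fderiv]
  simp [← map_add]

end PartialDerivatives

section Christoffel

variable {m : ℕ} {g : (Fin m → ℝ) → Fin m → Fin m → ℝ} {q : Fin m → ℝ}

/-- Christoffel symbols of the first kind `Γ_{l,jk}`. -/
def christoffelFst (g : (Fin m → ℝ) → Fin m → Fin m → ℝ) (l j k : Fin m) (q : Fin m → ℝ) : ℝ :=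
  (1 / 2) * (pd k (fun y => g y l j) q + pd j (fun y => g y l k) q - pd l (fun y => g y j k) q)

/-- The matrix `Γ_{l,jk} u^k`, with rows `l` and columns `j`. -/
def lowerConnMatrix (g : (Fin m → ℝ) → Fin m → Fin m → ℝ) (q u : Fin m → ℝ) :
    Matrix (Fin m) (Fin m) ℝ :=
  Matrix.of fun l j => ∑ k, christoffelFst g l j k q * u k

/-- The connection matrix `G^i_{jk} u^k` of the direction `u`, with rows `i` and columns `j`. -/
def connMatrix (g : (Fin m → ℝ) → Fin m → Fin m → ℝ) (q u : Fin m → ℝ) :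
    Matrix (Fin m) (Fin m) ℝ :=
  Matrix.of fun i j => ∑ k, christoffel g i j k q * u k

lemma connMatrix_eq (g : (Fin m → ℝ) → Fin m → Fin m → ℝ) (q u : Fin m → ℝ) :
    connMatrix g q u = (Matrix.of (g q))⁻¹ * lowerConnMatrix g q u := by
  ext i j
  simp only [connMatrix, lowerConnMatrix, christoffel, christoffelFst, minv, Matrix.mul_apply,
    Matrix.of_apply, Finset.mul_sum, Finset.sum_mul]
  rw [Finset.sum_comm]
  exact Finset.sum_congr rfl fun l _ => Finset.sum_congr rfl fun k _ => by ring

lemma mul_connMatrix (gdet : (Matrix.of (g q)).det ≠ 0) (u : Fin m → ℝ) :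
    Matrix.of (g q) * connMatrix g q u = lowerConnMatrix g q u := by
  rw [connMatrix_eq, Matrix.mul_nonsing_inv_cancel_left _ _ (isUnit_iff_ne_zero.2 gdet)]

lemma lowerConnMatrix_sub (u v : Fin m → ℝ) :
    lowerConnMatrix g q (u - v) = lowerConnMatrix g q u - lowerConnMatrix g q v := by
  ext l j
  simp [lowerConnMatrix, mul_sub]

lemma connMatrix_single (α i j : Fin m) :
    connMatrix g q (Pi.single α 1) i j = christoffel g i j α q := by
  simp [connMatrix, Pi.single_apply]

section Symmetric

variable (gsymm : ∀ q i j, g q i j = g q j i)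
include gsymm

lemma christoffelFst_symm (l j k : Fin m) :
    christoffelFst g l j k q = christoffelFst g l k j q := by
  simp only [christoffelFst, gsymm _ k j]
  ring

lemma christoffel_symm (i j k : Fin m) : christoffel g i j k q = christoffel g i k j q := by
  simp only [christoffel, gsymm _ k j]
  congr! 3
  ring

lemma lowerConnMatrix_mulVec_comm (u v : Fin m → ℝ) :
    lowerConnMatrix g q u *ᵥ v = lowerConnMatrix g q v *ᵥ u := by
  ext l
  simp only [lowerConnMatrix, Matrix.mulVec, dotProduct, Matrix.of_apply, Finset.sum_mul]
  rw [Finset.sum_comm]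
  refine Finset.sum_congr rfl fun j _ => Finset.sum_congr rfl fun k _ => ?_
  rw [christoffelFst_symm gsymm]
  ring

lemma of_fderiv_metric_apply (hg : DifferentiableAt ℝ g q) (u : Fin m → ℝ) :
    Matrix.of (fderiv ℝ g q u) = lowerConnMatrix g q u + (lowerConnMatrix g q u)ᵀ := by
  ext l j
  have hgl : DifferentiableAt ℝ (fun y => g y l) q := differentiableAt_pi.1 hg l
  simp only [Matrix.of_apply, Matrix.add_apply, Matrix.transpose_apply, lowerConnMatrix,
    fderiv_pi_apply hg, fderiv_pi_apply hgl, fderiv_apply_eq_sum_pd, ← Finset.sum_add_distrib]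
  refine Finset.sum_congr rfl fun k _ => ?_
  simp only [christoffelFst, gsymm _ j l]
  ring

lemma dotProduct_partialDeriv_metric_mulVec (hg : DifferentiableAt ℝ g q) (k : Fin m)
    (u v : Fin m → ℝ) :
    u ⬝ᵥ Matrix.of (partialDeriv k g q) *ᵥ v
      = ((lowerConnMatrix g q u)ᵀ *ᵥ v + (lowerConnMatrix g q v)ᵀ *ᵥ u) k := by
  have pairing : ∀ a b, a ⬝ᵥ lowerConnMatrix g q (Pi.single k 1) *ᵥ b
      = ((lowerConnMatrix g q b)ᵀ *ᵥ a) k := fun a b => by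
    rw [lowerConnMatrix_mulVec_comm gsymm, Matrix.dotProduct_mulVec, Matrix.mulVec_transpose,
      dotProduct_single_one]
  have swap : u ⬝ᵥ (lowerConnMatrix g q (Pi.single k 1))ᵀ *ᵥ v
      = v ⬝ᵥ lowerConnMatrix g q (Pi.single k 1) *ᵥ u := by
    rw [Matrix.dotProduct_mulVec, Matrix.vecMul_transpose, dotProduct_comm]
  rw [partialDeriv, of_fderiv_metric_apply gsymm hg, Matrix.add_mulVec, dotProduct_add, swap,
    pairing, pairing, Pi.add_apply, add_comm]

end Symmetric

end Christoffel

section Density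

variable {p : ℕ} {h : (Fin p → ℝ) → Fin p → Fin p → ℝ} {t : Fin p → ℝ}

lemma hasDerivAt_sqrt_abs {d : ℝ} (hd : d ≠ 0) :
    HasDerivAt (fun d => √|d|) (√|d| / (2 * d)) d := by
  have abs_ne : |d| ≠ 0 := abs_ne_zero.2 hd
  have sqrt_ne : √|d| ≠ 0 := Real.sqrt_ne_zero'.2 (abs_pos.2 hd)
  convert (hasDerivAt_abs hd).sqrt abs_ne using 1
  rw [div_eq_div_iff (mul_ne_zero two_ne_zero hd) (mul_ne_zero two_ne_zero sqrt_ne)]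
  linear_combination 2 * Real.mul_self_sqrt (abs_nonneg d) - 2 * sign_mul_self d

lemma hasFDerivAt_sqrtDet (hh : DifferentiableAt ℝ h t) (hdet : (Matrix.of (h t)).det ≠ 0) :
    HasFDerivAt (sqrtDet h) ((sqrtDet h t / (2 * (Matrix.of (h t)).det)) •
      (fderiv ℝ (fun A : Fin p → Fin p → ℝ => (Matrix.of A).det) (h t)).comp (fderiv ℝ h t)) t := by
  have det_deriv : HasFDerivAt (fun s => (Matrix.of (h s)).det) _ t :=
    (differentiableAt_det (h t)).hasFDerivAt.comp t hh.hasFDerivAt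
  exact HasDerivAt.comp_hasFDerivAt (h₂ := fun d => √|d|) t (hasDerivAt_sqrt_abs hdet) det_deriv

lemma fderiv_sqrtDet_apply (hsymm : ∀ t α β, h t α β = h t β α) (hh : DifferentiableAt ℝ h t)
    (hdet : (Matrix.of (h t)).det ≠ 0) (u : Fin p → ℝ) :
    fderiv ℝ (sqrtDet h) t u = sqrtDet h t * (connMatrix h t u).trace := by
  have trace_transpose : ((Matrix.of (h t)).adjugate * (lowerConnMatrix h t u)ᵀ).trace
      = ((Matrix.of (h t)).adjugate * lowerConnMatrix h t u).trace := by
    have h_isSymm : (Matrix.of (h t))ᵀ = Matrix.of (h t) := Matrix.IsSymm.ext fun i j => hsymm t j i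
    rw [← Matrix.trace_transpose, Matrix.transpose_mul, Matrix.transpose_transpose,
      Matrix.adjugate_transpose, h_isSymm, Matrix.trace_mul_comm]
  rw [(hasFDerivAt_sqrtDet hh hdet).fderiv, connMatrix_eq, Matrix.inv_def, Ring.inverse_eq_inv']
  simp only [smul_apply, ContinuousLinearMap.comp_apply, fderiv_det_apply,
    of_fderiv_metric_apply hsymm hh, Matrix.mul_add, Matrix.trace_add, trace_transpose,
    Matrix.smul_mul, Matrix.trace_smul, smul_eq_mul]
  field_simp
  ring

lemma of_fderiv_inverse_metric_apply (hsymm : ∀ t α β, h t α β = h t β α)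
    (hh : DifferentiableAt ℝ h t) (hdet : (Matrix.of (h t)).det ≠ 0) (u : Fin p → ℝ) :
    Matrix.of (fderiv ℝ (fun s => minv (h s)) t u)
      = -(connMatrix h t u * (Matrix.of (h t))⁻¹ + (Matrix.of (h t))⁻¹ * (connMatrix h t u)ᵀ) := by
  have inv_transpose : ((Matrix.of (h t))⁻¹)ᵀ = (Matrix.of (h t))⁻¹ :=
    Matrix.IsSymm.ext fun i j => minv_symm (hsymm t) j i
  have chain_rule := ((differentiableAt_minv hdet).hasFDerivAt.comp t hh.hasFDerivAt).fderiv
  have apply_chain_rule : fderiv ℝ (fun s => minv (h s)) t u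
      = fderiv ℝ minv (h t) (fderiv ℝ h t u) := congr($chain_rule u)
  rw [apply_chain_rule, of_fderiv_minv_apply hdet, of_fderiv_metric_apply hsymm hh, connMatrix_eq,
    Matrix.transpose_mul, inv_transpose]
  noncomm_ring

lemma differentiableAt_inverse_metric (hh : DifferentiableAt ℝ h t)
    (hdet : (Matrix.of (h t)).det ≠ 0) : DifferentiableAt ℝ (fun s => minv (h s)) t :=
  (differentiableAt_minv hdet).comp t hh

lemma differentiableAt_density (hh : DifferentiableAt ℝ h t) (hdet : (Matrix.of (h t)).det ≠ 0)
    (α β : Fin p) : DifferentiableAt ℝ (fun s => sqrtDet h s * minv (h s) α β) t :=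
  (hasFDerivAt_sqrtDet hh hdet).differentiableAt.mul
    (differentiableAt_pi.1 (differentiableAt_pi.1 (differentiableAt_inverse_metric hh hdet) α) β)

lemma pd_density (hsymm : ∀ t α β, h t α β = h t β α) (hh : DifferentiableAt ℝ h t)
    (hdet : (Matrix.of (h t)).det ≠ 0) (α β γ : Fin p) :
    pd γ (fun s => sqrtDet h s * minv (h s) α β) t
      = sqrtDet h t * (∑ δ, christoffel h δ δ γ t * minv (h t) α β
        - ∑ δ, christoffel h α δ γ t * minv (h t) δ β
        - ∑ δ, christoffel h β δ γ t * minv (h t) α δ) := by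
  have minv_differentiable := differentiableAt_inverse_metric hh hdet
  have row_differentiable := differentiableAt_pi.1 minv_differentiable α
  have entry_deriv : fderiv ℝ (fun s => minv (h s) α β) t (Pi.single γ 1)
      = -(∑ δ, christoffel h α δ γ t * minv (h t) δ β
        + ∑ δ, christoffel h β δ γ t * minv (h t) α δ) := by
    have matrix_deriv := of_fderiv_inverse_metric_apply hsymm hh hdet (Pi.single γ 1)
    rw [← fderiv_pi_apply row_differentiable, ← fderiv_pi_apply minv_differentiable]
    simpa [Matrix.mul_apply, connMatrix_single, minv, mul_comm] using congr($matrix_deriv α β)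
  rw [pd, fderiv_fun_mul (hasFDerivAt_sqrtDet hh hdet).differentiableAt
    (differentiableAt_pi.1 row_differentiable β)]
  simp only [add_apply, smul_apply, smul_eq_mul,
    entry_deriv, fderiv_sqrtDet_apply hsymm hh hdet, Matrix.trace, Matrix.diag_apply,
    connMatrix_single, ← Finset.sum_mul]
  ring

lemma sum_pd_density (hsymm : ∀ t α β, h t α β = h t β α) (hh : DifferentiableAt ℝ h t)
    (hdet : (Matrix.of (h t)).det ≠ 0) (β : Fin p) :
    ∑ α, pd α (fun s => sqrtDet h s * minv (h s) α β) t
      = -(sqrtDet h t * ∑ α, ∑ γ, minv (h t) α γ * christoffel h β α γ t) := by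
  have trace_cancel : ∑ α, ∑ δ, christoffel h δ δ α t * minv (h t) α β
      = ∑ α, ∑ δ, christoffel h α δ α t * minv (h t) δ β := by
    rw [Finset.sum_comm]
    simp only [christoffel_symm hsymm]
  simp only [pd_density hsymm hh hdet, ← Finset.mul_sum, Finset.sum_sub_distrib, trace_cancel,
    sub_self, zero_sub, mul_neg, mul_comm (minv _ _ _), christoffel_symm hsymm β]

lemma sum_partialDeriv_density_smul {F : Type*} [NormedAddCommGroup F] [NormedSpace ℝ F]
    {Y : Fin p → (Fin p → ℝ) → F} (hsymm : ∀ t α β, h t α β = h t β α)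
    (hh : DifferentiableAt ℝ h t) (hdet : (Matrix.of (h t)).det ≠ 0)
    (hY : ∀ β, DifferentiableAt ℝ (Y β) t) :
    ∑ α, partialDeriv α (fun s => ∑ β, (sqrtDet h s * minv (h s) α β) • Y β s) t
      = sqrtDet h t • ∑ α, ∑ β, minv (h t) α β •
        (partialDeriv α (Y β) t - ∑ γ, christoffel h γ α β t • Y γ t) := by
  have leibniz : ∀ α, partialDeriv α (fun s => ∑ β, (sqrtDet h s * minv (h s) α β) • Y β s) t
      = ∑ β, ((sqrtDet h t * minv (h t) α β) • partialDeriv α (Y β) t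
        + pd α (fun s => sqrtDet h s * minv (h s) α β) t • Y β t) := fun α => by
    have density_differentiable := differentiableAt_density hh hdet α
    have summand_differentiable := fun β => (density_differentiable β).fun_smul (hY β)
    rw [partialDeriv, fderiv_fun_sum fun β _ => summand_differentiable β,
      sum_apply]
    exact Finset.sum_congr rfl fun β _ =>
      congr($(fderiv_fun_smul (density_differentiable β) (hY β)) _)
  have divergence_density : ∑ α, ∑ β, pd α (fun s => sqrtDet h s * minv (h s) α β) t • Y β t
      = -(sqrtDet h t • ∑ α, ∑ β, minv (h t) α β • ∑ γ, christoffel h γ α β t • Y γ t) := by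
    rw [Finset.sum_comm]
    simp only [← Finset.sum_smul, sum_pd_density hsymm hh hdet]
    simp only [neg_smul, Finset.sum_neg_distrib, mul_smul, ← Finset.smul_sum, Finset.sum_smul]
    congr 2
    calc ∑ β, ∑ α, ∑ γ, minv (h t) α γ • christoffel h β α γ t • Y β t
        = ∑ α, ∑ β, ∑ γ, minv (h t) α γ • christoffel h β α γ t • Y β t := Finset.sum_comm
      _ = ∑ α, ∑ γ, ∑ β, minv (h t) α γ • christoffel h β α γ t • Y β t :=
        Finset.sum_congr rfl fun α _ => Finset.sum_comm
      _ = _ := by simp only [Finset.smul_sum]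
  rw [Finset.sum_congr rfl fun α _ => leibniz α]
  simp only [Finset.sum_add_distrib, divergence_density, smul_sub, Finset.sum_sub_distrib,
    ← Finset.smul_sum, mul_smul, ← sub_eq_add_neg]

end Density

section Energy

variable {ι κ E : Type*} [Fintype ι] [Fintype κ] [NormedAddCommGroup E] [NormedSpace ℝ E]
  {W : ι → ι → ℝ} {a : E → κ → κ → ℝ} {z : E}

lemma sum_smul_congr_of_symm {M : Type*} [AddCommGroup M] [Module ℝ M]
    (hW : ∀ α β, W α β = W β α) {S T : ι → ι → M}
    (hST : ∀ α β, S α β + S β α = T α β + T β α) :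
    ∑ α, ∑ β, W α β • S α β = ∑ α, ∑ β, W α β • T α β := by
  have symmetrize : ∀ T : ι → ι → M,
      (2 : ℝ) • ∑ α, ∑ β, W α β • T α β = ∑ α, ∑ β, W α β • (T α β + T β α) := fun T => by
    have swap : ∑ α, ∑ β, W α β • T β α = ∑ α, ∑ β, W α β • T α β := by
      rw [Finset.sum_comm]
      simp only [hW]
    simp only [smul_add, Finset.sum_add_distrib, swap, two_smul]
  refine smul_right_injective M (two_ne_zero' ℝ) ?_
  simp only [symmetrize, hST]

lemma fderiv_dotProduct_mulVec_apply {u v : E → κ → ℝ} (asymm : ∀ i j, a z i j = a z j i)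
    (ha : DifferentiableAt ℝ a z) (hu : DifferentiableAt ℝ u z) (hv : DifferentiableAt ℝ v z)
    (w : E) :
    fderiv ℝ (fun s => u s ⬝ᵥ Matrix.of (a s) *ᵥ v s) z w
      = u z ⬝ᵥ Matrix.of (fderiv ℝ a z w) *ᵥ v z
        + fderiv ℝ u z w ⬝ᵥ Matrix.of (a z) *ᵥ v z
        + fderiv ℝ v z w ⬝ᵥ Matrix.of (a z) *ᵥ u z := by
  have a_isSymm : (Matrix.of (a z))ᵀ = Matrix.of (a z) := Matrix.IsSymm.ext fun i j => asymm j i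
  rw [fderiv_dotProduct_apply hu (differentiableAt_mulVec ha hv), fderiv_mulVec_apply ha hv,
    dotProduct_add, Matrix.dotProduct_mulVec (u z) (Matrix.of (a z)), ← Matrix.mulVec_transpose,
    a_isSymm, dotProduct_comm _ (fderiv ℝ v z w)]
  ring

lemma fderiv_energy_apply {y : ι → E → κ → ℝ} (hW : ∀ α β, W α β = W β α)
    (asymm : ∀ i j, a z i j = a z j i) (ha : DifferentiableAt ℝ a z)
    (hy : ∀ α, DifferentiableAt ℝ (y α) z) (c : ℝ) (w : E) :
    fderiv ℝ (fun s => (1 / 2) * (∑ α, ∑ β, W α β * (y α s ⬝ᵥ Matrix.of (a s) *ᵥ y β s)) * c) z w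
      = c * ∑ α, ∑ β, W α β * ((1 / 2) * (y α z ⬝ᵥ Matrix.of (fderiv ℝ a z w) *ᵥ y β z)
        + fderiv ℝ (y α) z w ⬝ᵥ Matrix.of (a z) *ᵥ y β z) := by
  have pairing_deriv : ∀ α β,
      HasFDerivAt (fun s => y α s ⬝ᵥ Matrix.of (a s) *ᵥ y β s) _ z := fun α β =>
    (differentiableAt_dotProduct (hy α) (differentiableAt_mulVec ha (hy β))).hasFDerivAt
  have energy_deriv := ((HasFDerivAt.fun_sum fun α (_ : α ∈ Finset.univ) =>
    HasFDerivAt.fun_sum fun β (_ : β ∈ Finset.univ) =>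
      (pairing_deriv α β).const_mul (W α β)).const_mul (1 / 2)).mul_const c
  have symmetrize := sum_smul_congr_of_symm hW
    (S := fun α β => (1 / 2) * fderiv ℝ (fun s => y α s ⬝ᵥ Matrix.of (a s) *ᵥ y β s) z w)
    (T := fun α β => (1 / 2) * (y α z ⬝ᵥ Matrix.of (fderiv ℝ a z w) *ᵥ y β z)
        + fderiv ℝ (y α) z w ⬝ᵥ Matrix.of (a z) *ᵥ y β z)
    fun α β => by simp only [fderiv_dotProduct_mulVec_apply asymm ha (hy _) (hy _)]; ring
  simp only [smul_eq_mul] at symmetrize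
  rw [energy_deriv.fderiv, ← symmetrize]
  simp only [smul_apply, sum_apply, smul_eq_mul, Finset.mul_sum]
  exact Finset.sum_congr rfl fun α _ => Finset.sum_congr rfl fun β _ => by ring

end Energy

section PoissonSystem

variable {p n : ℕ} {h : (Fin p → ℝ) → Fin p → Fin p → ℝ} {g : (Fin n → ℝ) → Fin n → Fin n → ℝ}
  {X : Fin n → Fin p → (Fin p → ℝ) → (Fin n → ℝ) → ℝ} {x : (Fin p → ℝ) → Fin n → ℝ}
  {t : Fin p → ℝ} {q : Fin n → ℝ}

/-- The vector `X_α` with components `X^i_α`. -/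
def fieldVec (X : Fin n → Fin p → (Fin p → ℝ) → (Fin n → ℝ) → ℝ) (α : Fin p) (t : Fin p → ℝ)
    (q : Fin n → ℝ) : Fin n → ℝ :=
  fun i => X i α t q

/-- The relative velocity `y_α = v_α - X_α`. -/
def relVelocity (X : Fin n → Fin p → (Fin p → ℝ) → (Fin n → ℝ) → ℝ) (t : Fin p → ℝ)
    (q : Fin n → ℝ) (v : Fin n → Fin p → ℝ) (α : Fin p) : Fin n → ℝ :=
  fun i => v i α - X i α t q

/-- The Lagrangian `½ h^{αβ} g_{ij} (v^i_α - X^i_α)(v^j_β - X^j_β) √|det h|`. -/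
def lagrangian (h : (Fin p → ℝ) → Fin p → Fin p → ℝ) (g : (Fin n → ℝ) → Fin n → Fin n → ℝ)
    (X : Fin n → Fin p → (Fin p → ℝ) → (Fin n → ℝ) → ℝ) (t : Fin p → ℝ) (q : Fin n → ℝ)
    (v : Fin n → Fin p → ℝ) : ℝ :=
  (1 / 2) * (∑ α, ∑ β, ∑ i, ∑ j, minv (h t) α β * g q i j
    * (v i α - X i α t q) * (v j β - X j β t q)) * sqrtDet h t

lemma lagrangian_eq_energy (t : Fin p → ℝ) (q : Fin n → ℝ) (v : Fin n → Fin p → ℝ) :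
    lagrangian h g X t q v = (1 / 2) * (∑ α, ∑ β, minv (h t) α β
      * (relVelocity X t q v α ⬝ᵥ Matrix.of (g q) *ᵥ relVelocity X t q v β)) * sqrtDet h t := by
  have pairing : ∀ α β, ∑ i, ∑ j, minv (h t) α β * g q i j
      * (v i α - X i α t q) * (v j β - X j β t q) = minv (h t) α β
      * (relVelocity X t q v α ⬝ᵥ Matrix.of (g q) *ᵥ relVelocity X t q v β) := fun α β => by
    simp only [relVelocity, dotProduct, Matrix.mulVec, Matrix.of_apply, Finset.mul_sum]
    exact Finset.sum_congr rfl fun i _ => Finset.sum_congr rfl fun j _ => by ring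
  simp only [lagrangian, pairing]

lemma fderiv_lagrangian_position_apply (hsymm : ∀ t α β, h t α β = h t β α)
    (gsymm : ∀ q i j, g q i j = g q j i) (hg : DifferentiableAt ℝ g q)
    (hX : ∀ α, DifferentiableAt ℝ (fieldVec X α t) q) (v : Fin n → Fin p → ℝ) (k : Fin n) :
    fderiv ℝ (fun q => lagrangian h g X t q v) q (Pi.single k 1)
      = sqrtDet h t * (∑ α, ∑ β, minv (h t) α β •
        ((lowerConnMatrix g q (relVelocity X t q v α))ᵀ *ᵥ relVelocity X t q v β
          - (Matrix.of (jet (fieldVec X α t) q))ᵀ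
              *ᵥ Matrix.of (g q) *ᵥ relVelocity X t q v β)) k := by
  have relVelocity_deriv : ∀ α, HasFDerivAt (fun q => relVelocity X t q v α)
      (-fderiv ℝ (fieldVec X α t) q) q := fun α => (hX α).hasFDerivAt.const_sub fun i => v i α
  have jet_pairing : ∀ α (u : Fin n → ℝ), fderiv ℝ (fieldVec X α t) q (Pi.single k 1) ⬝ᵥ u
      = ((Matrix.of (jet (fieldVec X α t) q))ᵀ *ᵥ u) k := fun α u => by
    rw [fderiv_apply_eq_jet_mulVec (hX α), dotProduct_comm, Matrix.dotProduct_mulVec,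
      dotProduct_single_one, Matrix.mulVec_transpose]
  simp only [lagrangian_eq_energy]
  rw [fderiv_energy_apply (minv_symm (hsymm t)) (gsymm q) hg
    fun α => (relVelocity_deriv α).differentiableAt]
  simp only [(relVelocity_deriv _).fderiv, neg_apply, neg_dotProduct, jet_pairing, Finset.sum_apply,
    Pi.smul_apply, Pi.sub_apply]
  congr 1
  refine sum_smul_congr_of_symm (minv_symm (hsymm t)) fun α β => ?_
  have metric_deriv := dotProduct_partialDeriv_metric_mulVec gsymm hg k
  simp only [partialDeriv, Pi.add_apply] at metric_deriv
  simp only [metric_deriv]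
  ring

lemma fderiv_lagrangian_velocity_apply (hsymm : ∀ t α β, h t α β = h t β α)
    (gsymm : ∀ q i j, g q i j = g q j i) (v : Fin n → Fin p → ℝ) (k : Fin n) (α : Fin p) :
    fderiv ℝ (fun v => lagrangian h g X t q v) v (Pi.single k (Pi.single α 1))
      = (∑ β, (sqrtDet h t * minv (h t) α β) • Matrix.of (g q) *ᵥ relVelocity X t q v β) k := by
  let coordinate (γ : Fin p) : (Fin n → Fin p → ℝ) →L[ℝ] Fin n → ℝ :=
    ContinuousLinearMap.pi fun i => (ContinuousLinearMap.proj (φ := fun _ : Fin p => ℝ) γ).comp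
      (ContinuousLinearMap.proj (φ := fun _ : Fin n => Fin p → ℝ) i)
  have relVelocity_deriv : ∀ γ, HasFDerivAt (fun v => relVelocity X t q v γ) (coordinate γ) v :=
    fun γ => (coordinate γ).hasFDerivAt.sub_const (fieldVec X γ t q)
  have coordinate_direction : ∀ γ, coordinate γ (Pi.single k (Pi.single α 1))
      = Pi.single k ((Pi.single α 1 : Fin p → ℝ) γ) := fun γ =>
    funext fun i => Pi.apply_single (fun _ (u : Fin p → ℝ) => u γ) (fun _ => rfl) k _ i
  simp only [lagrangian_eq_energy]
  rw [fderiv_energy_apply (a := fun _ => g q) (minv_symm (hsymm t)) (gsymm q)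
    (differentiableAt_const _) fun γ => (relVelocity_deriv γ).differentiableAt]
  simp [(relVelocity_deriv _).fderiv, coordinate_direction, Pi.single_apply, Finset.mul_sum,
    mul_assoc]

/-- The relative velocity `x_α - X_α` along a map `x`. -/
def relVelocityAlong (X : Fin n → Fin p → (Fin p → ℝ) → (Fin n → ℝ) → ℝ)
    (x : (Fin p → ℝ) → Fin n → ℝ) (α : Fin p) (t : Fin p → ℝ) : Fin n → ℝ :=
  partialDeriv α x t - fieldVec X α t (x t)

lemma relVelocity_jet (hx : DifferentiableAt ℝ x t) (α : Fin p) :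
    relVelocity X t (x t) (jet x t) α = relVelocityAlong X x α t :=
  funext fun i => congrArg (· - X i α t (x t)) (jet_eq_partialDeriv hx i α)

lemma hasFDerivAt_relVelocityAlong (hx : DifferentiableAt ℝ x t)
    (hx' : DifferentiableAt ℝ (fderiv ℝ x) t) {β : Fin p}
    (hX : DifferentiableAt ℝ (fun z : (Fin p → ℝ) × (Fin n → ℝ) => fieldVec X β z.1 z.2) (t, x t)) :
    HasFDerivAt (relVelocityAlong X x β)
      (fderiv ℝ (partialDeriv β x) t - fderiv ℝ (fun s => fieldVec X β s (x s)) t) t :=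
  (hx'.clm_apply (differentiableAt_const (Pi.single β 1))).hasFDerivAt.sub
    (hX.comp t (f := fun s => (s, x s)) (differentiableAt_id.prodMk hx)).hasFDerivAt

lemma partialDeriv_relVelocityAlong (hx : DifferentiableAt ℝ x t)
    (hx' : DifferentiableAt ℝ (fderiv ℝ x) t) {β : Fin p}
    (hX : DifferentiableAt ℝ (fun z : (Fin p → ℝ) × (Fin n → ℝ) => fieldVec X β z.1 z.2) (t, x t))
    (α : Fin p) :
    partialDeriv α (relVelocityAlong X x β) t
      = partialDeriv α (partialDeriv β x) t - partialDeriv α (fun s => fieldVec X β s (x t)) t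
        - Matrix.of (jet (fieldVec X β t) (x t)) *ᵥ partialDeriv α x t := by
  have hX_snd : DifferentiableAt ℝ (fieldVec X β t) (x t) :=
    hX.comp (x t) (f := fun q => (t, q)) ((differentiableAt_const t).prodMk differentiableAt_id)
  rw [partialDeriv, (hasFDerivAt_relVelocityAlong hx hx' hX).fderiv, sub_apply,
    fderiv_comp_graph hX hx, fderiv_apply_eq_jet_mulVec hX_snd, sub_add_eq_sub_sub]
  rfl

lemma partialDeriv_metric_mulVec (gsymm : ∀ q i j, g q i j = g q j i)
    (hg : DifferentiableAt ℝ g (x t)) (hx : DifferentiableAt ℝ x t)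
    {y : (Fin p → ℝ) → Fin n → ℝ} (hy : DifferentiableAt ℝ y t) (α : Fin p) :
    partialDeriv α (fun s => Matrix.of (g (x s)) *ᵥ y s) t
      = lowerConnMatrix g (x t) (partialDeriv α x t) *ᵥ y t
        + (lowerConnMatrix g (x t) (partialDeriv α x t))ᵀ *ᵥ y t
        + Matrix.of (g (x t)) *ᵥ partialDeriv α y t := by
  have chain_rule := (hg.hasFDerivAt.comp t hx.hasFDerivAt).fderiv
  have apply_chain_rule : fderiv ℝ (fun s => g (x s)) t (Pi.single α 1)
      = fderiv ℝ g (x t) (partialDeriv α x t) := congr($chain_rule _)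
  rw [partialDeriv, fderiv_mulVec_apply (A := fun s => g (x s)) (hg.comp t hx) hy, apply_chain_rule,
    of_fderiv_metric_apply gsymm hg, Matrix.add_mulVec]
  rfl

lemma sum_pd_momentum (hsymm : ∀ t α β, h t α β = h t β α) (hh : DifferentiableAt ℝ h t)
    (hdet : (Matrix.of (h t)).det ≠ 0) (gsymm : ∀ q i j, g q i j = g q j i)
    (hg : DifferentiableAt ℝ g (x t)) (hx : Differentiable ℝ x)
    (hy : ∀ α, DifferentiableAt ℝ (relVelocityAlong X x α) t) (k : Fin n) :
    ∑ α, pd α (fun s => fderiv ℝ (fun v => lagrangian h g X s (x s) v) (jet x s)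
        (Pi.single k (Pi.single α 1))) t
      = sqrtDet h t * (∑ α, ∑ β, minv (h t) α β •
        (partialDeriv α (fun s => Matrix.of (g (x s)) *ᵥ relVelocityAlong X x β s) t
          - Matrix.of (g (x t)) *ᵥ ∑ γ, christoffel h γ α β t • relVelocityAlong X x γ t)) k := by
  have momentum_differentiable : ∀ β,
      DifferentiableAt ℝ (fun s => Matrix.of (g (x s)) *ᵥ relVelocityAlong X x β s) t := fun β =>
    differentiableAt_mulVec (hg.comp t (hx t)) (hy β)
  have divergence :=
    congrFun (sum_partialDeriv_density_smul hsymm hh hdet momentum_differentiable) k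
  simp only [Matrix.mulVec_sum, Matrix.mulVec_smul]
  rw [Pi.smul_apply, smul_eq_mul] at divergence
  rw [← divergence, Finset.sum_apply]
  refine Finset.sum_congr rfl fun α _ => ?_
  simp only [fderiv_lagrangian_velocity_apply hsymm gsymm, relVelocity_jet (hx _)]
  exact (fderiv_pi_apply (DifferentiableAt.fun_sum fun β _ =>
    (differentiableAt_density hh hdet α β).fun_smul (momentum_differentiable β)) _ k).symm

/-- The matrix `∇_j X^i_α`, with rows `i` and columns `j`. -/
def nablaMatrix (g : (Fin n → ℝ) → Fin n → Fin n → ℝ)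
    (X : Fin n → Fin p → (Fin p → ℝ) → (Fin n → ℝ) → ℝ) (α : Fin p) (t : Fin p → ℝ)
    (q : Fin n → ℝ) : Matrix (Fin n) (Fin n) ℝ :=
  Matrix.of fun i j => nablaX g X j i α t q

/-- The vector `x^i_{αβ} - D_β X^i_α - g^{ih} g_{kj} (∇_h X^k_α) X^j_β - F_j{}^i{}_α x^j_β`, whose
contraction with `h^{αβ}` vanishes exactly on the solutions of the Poisson system. The two terms
containing `g^{ih} g_{kj} ∇_h X^k_α` are merged into one acting on `x_β - X_β`. -/
def poissonTerm (h : (Fin p → ℝ) → Fin p → Fin p → ℝ) (g : (Fin n → ℝ) → Fin n → Fin n → ℝ)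
    (X : Fin n → Fin p → (Fin p → ℝ) → (Fin n → ℝ) → ℝ) (x : (Fin p → ℝ) → Fin n → ℝ)
    (α β : Fin p) (t : Fin p → ℝ) : Fin n → ℝ :=
  (fun i => covHess h g x i α β t) - (fun i => Dt h X β i α t (x t))
    + ((Matrix.of (g (x t)))⁻¹ * (nablaMatrix g X α t (x t))ᵀ * Matrix.of (g (x t)))
        *ᵥ relVelocityAlong X x β t
    - nablaMatrix g X α t (x t) *ᵥ partialDeriv β x t

lemma nablaMatrix_eq (g : (Fin n → ℝ) → Fin n → Fin n → ℝ)
    (X : Fin n → Fin p → (Fin p → ℝ) → (Fin n → ℝ) → ℝ) (α : Fin p) (t : Fin p → ℝ)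
    (q : Fin n → ℝ) : nablaMatrix g X α t q
      = Matrix.of (jet (fieldVec X α t) q) + connMatrix g q (fieldVec X α t q) :=
  rfl

lemma covHess_eq (hx : Differentiable ℝ x) (hx' : DifferentiableAt ℝ (fderiv ℝ x) t)
    (α β : Fin p) :
    (fun i => covHess h g x i α β t)
      = partialDeriv α (partialDeriv β x) t - ∑ γ, christoffel h γ α β t • partialDeriv γ x t
        + connMatrix g (x t) (partialDeriv β x t) *ᵥ partialDeriv α x t := by
  have hx'_apply : DifferentiableAt ℝ (partialDeriv β x) t :=
    hx'.clm_apply (differentiableAt_const _)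
  funext i
  simp only [covHess, jet_eq_partialDeriv (hx _), Pi.add_apply, Pi.sub_apply, Finset.sum_apply,
    Pi.smul_apply, smul_eq_mul, connMatrix, Matrix.mulVec, dotProduct, Matrix.of_apply,
    Finset.sum_mul]
  congr 1
  · exact congrArg (· - _) (fderiv_pi_apply hx'_apply _ i).symm
  · exact Finset.sum_congr rfl fun j _ => Finset.sum_congr rfl fun k _ => by ring

lemma Dt_eq {q : Fin n → ℝ} {α : Fin p} (hX : DifferentiableAt ℝ (fun s => fieldVec X α s q) t)
    (β : Fin p) :
    (fun i => Dt h X β i α t q)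
      = partialDeriv β (fun s => fieldVec X α s q) t
        - ∑ γ, christoffel h γ β α t • fieldVec X γ t q := by
  funext i
  simp only [Dt, Pi.sub_apply, Finset.sum_apply, Pi.smul_apply, smul_eq_mul]
  exact congrArg (· - _) (fderiv_pi_apply hX _ i).symm

lemma Fext_eq (g : (Fin n → ℝ) → Fin n → Fin n → ℝ)
    (X : Fin n → Fin p → (Fin p → ℝ) → (Fin n → ℝ) → ℝ) (i j : Fin n) (α : Fin p) (t : Fin p → ℝ)
    (q : Fin n → ℝ) : Fext g X j i α t q = (nablaMatrix g X α t q
      - (Matrix.of (g q))⁻¹ * (nablaMatrix g X α t q)ᵀ * Matrix.of (g q)) i j := by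
  simp only [Fext, minv, nablaMatrix, Matrix.sub_apply, Matrix.mul_apply, Matrix.transpose_apply,
    Matrix.of_apply, Finset.sum_mul]
  exact congrArg (_ - ·) (Finset.sum_congr rfl fun k _ => Finset.sum_congr rfl fun l _ => by ring)

lemma sum_adjoint_nabla_eq (g : (Fin n → ℝ) → Fin n → Fin n → ℝ)
    (X : Fin n → Fin p → (Fin p → ℝ) → (Fin n → ℝ) → ℝ) (i : Fin n) (α β : Fin p)
    (t : Fin p → ℝ) (q : Fin n → ℝ) :
    ∑ h', ∑ k, ∑ j, minv (g q) i h' * g q k j * nablaX g X h' k α t q * X j β t q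
      = (((Matrix.of (g q))⁻¹ * (nablaMatrix g X α t q)ᵀ * Matrix.of (g q))
        *ᵥ fieldVec X β t q) i := by
  rw [← Matrix.mulVec_mulVec, ← Matrix.mulVec_mulVec]
  simp only [minv, nablaMatrix, fieldVec, Matrix.mulVec, dotProduct, Matrix.transpose_apply,
    Matrix.of_apply, Finset.mul_sum]
  exact Finset.sum_congr rfl fun l _ => Finset.sum_congr rfl fun k _ =>
    Finset.sum_congr rfl fun j _ => by ring

lemma sum_smul_poissonTerm_apply (hx : DifferentiableAt ℝ x t) (i : Fin n) :
    (∑ α, ∑ β, minv (h t) α β • poissonTerm h g X x α β t) i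
      = ∑ α, ∑ β, minv (h t) α β * covHess h g x i α β t
        - ((∑ h', ∑ α, ∑ β, ∑ k, ∑ j, minv (g (x t)) i h' * minv (h t) α β
              * g (x t) k j * nablaX g X h' k α t (x t) * X j β t (x t))
          + (∑ α, ∑ β, ∑ j, minv (h t) α β * Fext g X j i α t (x t) * jet x t j β)
          + (∑ α, ∑ β, minv (h t) α β * Dt h X β i α t (x t))) := by
  have contract_adjoint_nabla : ∑ h', ∑ α, ∑ β, ∑ k, ∑ j, minv (g (x t)) i h' * minv (h t) α β
        * g (x t) k j * nablaX g X h' k α t (x t) * X j β t (x t)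
      = ∑ α, ∑ β, minv (h t) α β * (((Matrix.of (g (x t)))⁻¹ * (nablaMatrix g X α t (x t))ᵀ
        * Matrix.of (g (x t))) *ᵥ fieldVec X β t (x t)) i := by
    simp only [← sum_adjoint_nabla_eq, Finset.mul_sum]
    rw [Finset.sum_comm]
    refine Finset.sum_congr rfl fun α _ => Finset.sum_comm.trans ?_
    exact Finset.sum_congr rfl fun β _ => Finset.sum_congr rfl fun l _ =>
      Finset.sum_congr rfl fun k _ => Finset.sum_congr rfl fun j _ => by ring
  have contract_Fext : ∑ α, ∑ β, ∑ j, minv (h t) α β * Fext g X j i α t (x t) * jet x t j β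
      = ∑ α, ∑ β, minv (h t) α β * ((nablaMatrix g X α t (x t) - (Matrix.of (g (x t)))⁻¹
        * (nablaMatrix g X α t (x t))ᵀ * Matrix.of (g (x t))) *ᵥ partialDeriv β x t) i := by
    simp only [Fext_eq, jet_eq_partialDeriv hx, Matrix.mulVec, dotProduct, Finset.mul_sum,
      mul_assoc]
  rw [contract_adjoint_nabla, contract_Fext]
  simp only [poissonTerm, relVelocityAlong, Matrix.mulVec_sub, Matrix.sub_mulVec, Finset.sum_apply,
    Pi.smul_apply, Pi.add_apply, Pi.sub_apply, smul_eq_mul, mul_add, mul_sub,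
    Finset.sum_add_distrib, Finset.sum_sub_distrib]
  ring

lemma metric_mulVec_poissonTerm (hsymm : ∀ t α β, h t α β = h t β α)
    (gsymm : ∀ q i j, g q i j = g q j i) (gdet : (Matrix.of (g (x t))).det ≠ 0)
    (hx : Differentiable ℝ x) (hx' : DifferentiableAt ℝ (fderiv ℝ x) t) {α : Fin p}
    (hX : DifferentiableAt ℝ (fun s => fieldVec X α s (x t)) t) (β : Fin p) :
    Matrix.of (g (x t)) *ᵥ poissonTerm h g X x α β t
      = Matrix.of (g (x t)) *ᵥ (partialDeriv α (partialDeriv β x) t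
          - partialDeriv β (fun s => fieldVec X α s (x t)) t
          - ∑ γ, christoffel h γ α β t • relVelocityAlong X x γ t
          - Matrix.of (jet (fieldVec X α t) (x t)) *ᵥ partialDeriv β x t)
        + lowerConnMatrix g (x t) (partialDeriv β x t) *ᵥ partialDeriv α x t
        - lowerConnMatrix g (x t) (fieldVec X α t (x t)) *ᵥ partialDeriv β x t
        + (Matrix.of (jet (fieldVec X α t) (x t)))ᵀ
            *ᵥ Matrix.of (g (x t)) *ᵥ relVelocityAlong X x β t
        + (lowerConnMatrix g (x t) (fieldVec X α t (x t)))ᵀ *ᵥ relVelocityAlong X x β t := by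
  have lower_conn : ∀ u v, Matrix.of (g (x t)) *ᵥ connMatrix g (x t) u *ᵥ v
      = lowerConnMatrix g (x t) u *ᵥ v := fun u v => by
    rw [Matrix.mulVec_mulVec, mul_connMatrix gdet]
  have lower_adjoint : Matrix.of (g (x t)) *ᵥ ((Matrix.of (g (x t)))⁻¹
      * (nablaMatrix g X α t (x t))ᵀ * Matrix.of (g (x t))) *ᵥ relVelocityAlong X x β t
      = (Matrix.of (jet (fieldVec X α t) (x t)))ᵀ
          *ᵥ Matrix.of (g (x t)) *ᵥ relVelocityAlong X x β t
        + (lowerConnMatrix g (x t) (fieldVec X α t (x t)))ᵀ *ᵥ relVelocityAlong X x β t := by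
    have g_transpose : (Matrix.of (g (x t)))ᵀ = Matrix.of (g (x t)) :=
      Matrix.IsSymm.ext fun i j => gsymm (x t) j i
    have conn_transpose_mul : (connMatrix g (x t) (fieldVec X α t (x t)))ᵀ * Matrix.of (g (x t))
        = (lowerConnMatrix g (x t) (fieldVec X α t (x t)))ᵀ := by
      rw [← mul_connMatrix gdet, Matrix.transpose_mul, g_transpose]
    rw [Matrix.mulVec_mulVec, Matrix.mul_assoc, Matrix.mul_nonsing_inv_cancel_left _ _
      (isUnit_iff_ne_zero.2 gdet), nablaMatrix_eq, Matrix.transpose_add, Matrix.add_mul,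
      conn_transpose_mul, Matrix.add_mulVec, Matrix.mulVec_mulVec]
  rw [poissonTerm, covHess_eq hx hx', Dt_eq hX, Matrix.mulVec_sub, Matrix.mulVec_add, lower_adjoint,
    nablaMatrix_eq]
  simp only [relVelocityAlong, christoffel_symm hsymm _ β α, smul_sub, Finset.sum_sub_distrib,
    Matrix.mulVec_add, Matrix.mulVec_sub, Matrix.add_mulVec, lower_conn]
  abel

lemma eulerLagrange_eq (hsymm : ∀ t α β, h t α β = h t β α) (hh : DifferentiableAt ℝ h t)
    (hdet : (Matrix.of (h t)).det ≠ 0) (gsymm : ∀ q i j, g q i j = g q j i)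
    (hg : DifferentiableAt ℝ g (x t)) (gdet : (Matrix.of (g (x t))).det ≠ 0)
    (hX : ∀ α, DifferentiableAt ℝ
      (fun z : (Fin p → ℝ) × (Fin n → ℝ) => fieldVec X α z.1 z.2) (t, x t))
    (hx : Differentiable ℝ x) (hx' : DifferentiableAt ℝ (fderiv ℝ x) t) (k : Fin n) :
    fderiv ℝ (fun q => lagrangian h g X t q (jet x t)) (x t) (Pi.single k 1)
      - ∑ α, pd α (fun s => fderiv ℝ (fun v => lagrangian h g X s (x s) v) (jet x s)
          (Pi.single k (Pi.single α 1))) t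
      = -(sqrtDet h t * (Matrix.of (g (x t)) *ᵥ
          ∑ α, ∑ β, minv (h t) α β • poissonTerm h g X x α β t) k) := by
  have hX_fst := fun α => (hX α).comp t (f := fun s => (s, x t))
    (differentiableAt_id.prodMk (differentiableAt_const (x t)))
  have hX_snd := fun α => (hX α).comp (x t) (f := fun q => (t, q))
    ((differentiableAt_const t).prodMk differentiableAt_id)
  have hy := fun α => (hasFDerivAt_relVelocityAlong (hx t) hx' (hX α)).differentiableAt
  have split_direction : ∀ α v,
      (lowerConnMatrix g (x t) (relVelocityAlong X x α t))ᵀ *ᵥ v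
        = (lowerConnMatrix g (x t) (partialDeriv α x t))ᵀ *ᵥ v
          - (lowerConnMatrix g (x t) (fieldVec X α t (x t)))ᵀ *ᵥ v := fun α v => by
    rw [relVelocityAlong, lowerConnMatrix_sub, Matrix.transpose_sub, Matrix.sub_mulVec]
  have split_vector : ∀ u β,
      lowerConnMatrix g (x t) u *ᵥ relVelocityAlong X x β t
        = lowerConnMatrix g (x t) u *ᵥ partialDeriv β x t
          - lowerConnMatrix g (x t) (fieldVec X β t (x t)) *ᵥ u := fun u β => by
    rw [relVelocityAlong, Matrix.mulVec_sub, lowerConnMatrix_mulVec_comm gsymm _ (fieldVec _ _ _ _)]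
  rw [fderiv_lagrangian_position_apply hsymm gsymm hg hX_snd,
    sum_pd_momentum hsymm hh hdet gsymm hg hx hy, ← mul_sub, ← mul_neg, ← Pi.sub_apply,
    ← Pi.neg_apply]
  refine congrArg (_ * ·) (congrFun (?_ : _ = _) k)
  simp only [Matrix.mulVec_sum, Matrix.mulVec_smul, ← Finset.sum_sub_distrib, ← smul_sub,
    ← Finset.sum_neg_distrib, ← smul_neg]
  refine sum_smul_congr_of_symm (minv_symm (hsymm t)) fun α β => ?_
  simp only [metric_mulVec_poissonTerm hsymm gsymm gdet hx hx' (hX_fst _), relVelocity_jet (hx t),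
    partialDeriv_metric_mulVec gsymm hg (hx t) (hy _),
    partialDeriv_relVelocityAlong (hx t) hx' (hX _), christoffel_symm hsymm _ β α]
  simp only [split_direction, split_vector, Matrix.mulVec_sub,
    Matrix.mulVec_sum, Matrix.mulVec_smul]
  rw [lowerConnMatrix_mulVec_comm gsymm (partialDeriv β x t) (partialDeriv α x t)]
  abel

theorem extremal_iff_poisson_system_general
    (hsymm : ∀ t α β, h t α β = h t β α) (hh : Differentiable ℝ h)
    (hdet : ∀ t, (Matrix.of (h t)).det ≠ 0)
    (gsymm : ∀ q i j, g q i j = g q j i) (hg : Differentiable ℝ g)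
    (gdet : ∀ q, (Matrix.of (g q)).det ≠ 0)
    (hX : ∀ α, Differentiable ℝ fun z : (Fin p → ℝ) × (Fin n → ℝ) => fieldVec X α z.1 z.2)
    (hx : Differentiable ℝ x) (hx' : Differentiable ℝ (fderiv ℝ x)) :
    IsExtremal (lagrangian h g X) x ↔ ∀ (t : Fin p → ℝ) (i : Fin n),
      ∑ α, ∑ β, minv (h t) α β * covHess h g x i α β t
        = (∑ h', ∑ α, ∑ β, ∑ k, ∑ j, minv (g (x t)) i h' * minv (h t) α β
            * g (x t) k j * nablaX g X h' k α t (x t) * X j β t (x t))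
          + (∑ α, ∑ β, ∑ j, minv (h t) α β * Fext g X j i α t (x t) * jet x t j β)
          + (∑ α, ∑ β, minv (h t) α β * Dt h X β i α t (x t)) := by
  refine forall_congr' fun t => ?_
  have sqrtDet_ne : sqrtDet h t ≠ 0 := Real.sqrt_ne_zero'.2 (abs_pos.2 (hdet t))
  have metric_mulVec_eq_zero : ∀ u : Fin n → ℝ,
      (∀ k, (Matrix.of (g (x t)) *ᵥ u) k = 0) ↔ ∀ i, u i = 0 := fun u =>
    funext_iff.symm.trans <| Iff.trans
      ⟨Matrix.eq_zero_of_mulVec_eq_zero (gdet (x t)), fun hu => hu ▸ Matrix.mulVec_zero _⟩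
      funext_iff
  simp only [eulerLagrange_eq hsymm (hh t) (hdet t) gsymm (hg _) (gdet _) (fun α => hX α _) hx
    (hx' t), neg_eq_zero, mul_eq_zero, sqrtDet_ne, false_or]
  rw [metric_mulVec_eq_zero]
  simp only [sum_smul_poissonTerm_apply (hx t), sub_eq_zero]

end PoissonSystem

/-- extremals of `L = ½ h^{αβ} g_{ij} (x^i_α − X^i_α)(x^j_β − X^j_β)√|det h|`
are exactly the solutions of the generalized Poisson system (11). -/
theorem extremal_iff_poisson_system
    {p n : ℕ} (hp : 0 < p) (hn : 0 < n)
    (h : (Fin p → ℝ) → Fin p → Fin p → ℝ)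
    (hsymm : ∀ t α β, h t α β = h t β α)
    (hsmooth : ∀ α β, ContDiff ℝ (⊤ : ℕ∞) fun t => h t α β)
    (hdet : ∀ t, (Matrix.of (h t)).det ≠ 0)
    (g : (Fin n → ℝ) → Fin n → Fin n → ℝ)
    (gsymm : ∀ q i j, g q i j = g q j i)
    (gsmooth : ∀ i j, ContDiff ℝ (⊤ : ℕ∞) fun q => g q i j)
    (gdet : ∀ q, (Matrix.of (g q)).det ≠ 0)
    (X : Fin n → Fin p → (Fin p → ℝ) → (Fin n → ℝ) → ℝ)
    (Xsmooth : ∀ i α, ContDiff ℝ (⊤ : ℕ∞) fun z : (Fin p → ℝ) × (Fin n → ℝ) => X i α z.1 z.2)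
    (x : (Fin p → ℝ) → Fin n → ℝ) (hx : ContDiff ℝ (⊤ : ℕ∞) x) :
    IsExtremal
      (fun t q v =>
        (1 / 2) * (∑ α, ∑ β, ∑ i, ∑ j, minv (h t) α β * g q i j
          * (v i α - X i α t q) * (v j β - X j β t q)) * sqrtDet h t) x
      ↔ ∀ (t : Fin p → ℝ) (i : Fin n),
          ∑ α, ∑ β, minv (h t) α β * covHess h g x i α β t
            = (∑ h', ∑ α, ∑ β, ∑ k, ∑ j, minv (g (x t)) i h' * minv (h t) α β
                * g (x t) k j * nablaX g X h' k α t (x t) * X j β t (x t))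
              + (∑ α, ∑ β, ∑ j, minv (h t) α β * Fext g X j i α t (x t) * jet x t j β)
              + (∑ α, ∑ β, minv (h t) α β * Dt h X β i α t (x t)) :=
  extremal_iff_poisson_system_general hsymm
    ((contDiff_pi.2 fun α => contDiff_pi.2 (hsmooth α)).differentiable (by simp)) hdet gsymm
    ((contDiff_pi.2 fun i => contDiff_pi.2 (gsmooth i)).differentiable (by simp)) gdet
    (fun α => (contDiff_pi.2 fun i => Xsmooth i α).differentiable (by simp))
    (hx.differentiable (by simp))
    ((hx.fderiv_right (m := 1) (by norm_cast)).differentiable (by simp))
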